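/- arXiv:math/0111114 — 2 statements merged into one kernel-verified Lean document; each statement's English description precedes it below -/
import Mathlib

section
/- Let E ∈ GL(m,k) and F ∈ GL(n,k). There exists an algebra isomorphism φ from B(F,E) onto the opposite algebra B(E,F)^op determined on the generators y = (y_{ij}) of B(F,E) by φ(y) = F⁻¹·ᵀz·E entrywise, i.e. φ(y_{ij}) = (F⁻¹·ᵀz·E)_{ij}, where z = (z_{ij}) is the matrix of generators of B(E,F). -/
open scoped TensorProduct
open Matrix

noncomputable section

variable (k : Type) [Field k]

/-- The matrix of free generators of the free algebra on `Fin m × Fin n`. -/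
def gens (m n : ℕ) : Matrix (Fin m) (Fin n) (FreeAlgebra k (Fin m × Fin n)) :=
  Matrix.of fun i j => FreeAlgebra.ι k (i, j)

/-- A scalar matrix viewed as a matrix over a `k`-algebra. -/
def liftMat {A : Type} [Semiring A] [Algebra k A] {p q : ℕ}
    (M : Matrix (Fin p) (Fin q) k) : Matrix (Fin p) (Fin q) A :=
  M.map (algebraMap k A)

/-- The defining relations of the algebra `B(E,F)`:
`F⁻¹ * ᵀz * E * z = 1` and `z * F⁻¹ * ᵀz * E = 1`. -/
inductive BRel {m n : ℕ} (E : Matrix (Fin m) (Fin m) k) (F : Matrix (Fin n) (Fin n) k) :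
    FreeAlgebra k (Fin m × Fin n) → FreeAlgebra k (Fin m × Fin n) → Prop
  | left (i j : Fin n) : BRel E F
      ((liftMat k (A := FreeAlgebra k (Fin m × Fin n)) F⁻¹ * (gens k m n)ᵀ * liftMat k (A := FreeAlgebra k (Fin m × Fin n)) E * gens k m n :
          Matrix (Fin n) (Fin n) (FreeAlgebra k (Fin m × Fin n))) i j)
      ((1 : Matrix (Fin n) (Fin n) (FreeAlgebra k (Fin m × Fin n))) i j)
  | right (i j : Fin m) : BRel E F
      ((gens k m n * liftMat k (A := FreeAlgebra k (Fin m × Fin n)) F⁻¹ * (gens k m n)ᵀ * liftMat k (A := FreeAlgebra k (Fin m × Fin n)) E :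
          Matrix (Fin m) (Fin m) (FreeAlgebra k (Fin m × Fin n))) i j)
      ((1 : Matrix (Fin m) (Fin m) (FreeAlgebra k (Fin m × Fin n))) i j)

/-- The algebra `B(E,F)`.  The Hopf algebra `B(E)` is `BB k E E`. -/
abbrev BB {m n : ℕ} (E : Matrix (Fin m) (Fin m) k) (F : Matrix (Fin n) (Fin n) k) :=
  RingQuot (BRel k E F)

/-- The matrix of generators of `B(E,F)`. -/
def ZMat {m n : ℕ} (E : Matrix (Fin m) (Fin m) k) (F : Matrix (Fin n) (Fin n) k) :
    Matrix (Fin m) (Fin n) (BB k E F) :=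
  Matrix.of fun i j => RingQuot.mkAlgHom k (BRel k E F) (gens k m n i j)

lemma liftMat_mul' {A : Type} [Semiring A] [Algebra k A] {p q r : ℕ}
    (M : Matrix (Fin p) (Fin q) k) (N : Matrix (Fin q) (Fin r) k) :
    (liftMat k (A := A) M : Matrix _ _ A) * liftMat k (A := A) N = liftMat k (A := A) (M * N) := by
  rw [liftMat, liftMat, liftMat, Matrix.map_mul]

lemma liftMat_one' {A : Type} [Semiring A] [Algebra k A] {p : ℕ} :
    (liftMat k (1 : Matrix (Fin p) (Fin p) k) : Matrix _ _ A) = 1 := by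
  simp [liftMat]

lemma liftMat_tr {A : Type} [Semiring A] [Algebra k A] {p q : ℕ}
    (M : Matrix (Fin p) (Fin q) k) :
    (liftMat k M : Matrix _ _ A)ᵀ = liftMat k Mᵀ := rfl

lemma liftMat_map {A C : Type} [Semiring A] [Algebra k A] [Semiring C] [Algebra k C]
    (f : A →ₐ[k] C) {p q : ℕ} (M : Matrix (Fin p) (Fin q) k) :
    (liftMat k M : Matrix _ _ A).map f = liftMat k M := by
  ext i j; simp [liftMat]

/-- Transpose into the opposite algebra. -/
def opT {C : Type} {p q : ℕ} (M : Matrix (Fin p) (Fin q) C) : Matrix (Fin q) (Fin p) Cᵐᵒᵖ :=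
  Mᵀ.map MulOpposite.op

lemma opT_mul {C : Type} [Semiring C] {p q r : ℕ}
    (M : Matrix (Fin p) (Fin q) C) (N : Matrix (Fin q) (Fin r) C) :
    opT N * opT M = opT (M * N) := by
  ext i j; simp [opT, Matrix.mul_apply]

lemma opT_one {C : Type} [Semiring C] {p : ℕ} :
    opT (1 : Matrix (Fin p) (Fin p) C) = 1 := by
  ext i j; simp [opT, Matrix.one_apply, eq_comm]; split_ifs <;> simp

lemma opT_liftMat {C : Type} [Semiring C] [Algebra k C] {p q : ℕ}
    (M : Matrix (Fin p) (Fin q) k) :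
    (liftMat k M : Matrix _ _ Cᵐᵒᵖ) = opT (liftMat k Mᵀ) := by
  ext i j; simp [opT, liftMat]

lemma Z_rel {m n : ℕ} (E : Matrix (Fin m) (Fin m) k) (F : Matrix (Fin n) (Fin n) k) :
    liftMat k (A := BB k E F) F⁻¹ * (ZMat k E F)ᵀ * liftMat k (A := BB k E F) E * ZMat k E F = 1 ∧
    ZMat k E F * liftMat k (A := BB k E F) F⁻¹ * (ZMat k E F)ᵀ * liftMat k (A := BB k E F) E = 1 := by
  have hz : ZMat k E F = (gens k m n).map (RingQuot.mkAlgHom k (BRel k E F)) := rfl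
  rw [hz, ← liftMat_map k (RingQuot.mkAlgHom k (BRel k E F)) E,
    ← liftMat_map k (RingQuot.mkAlgHom k (BRel k E F)) F⁻¹, ← Matrix.transpose_map]
  simp only [← Matrix.map_mul]
  constructor
  · ext i j
    have := RingQuot.mkAlgHom_rel k (BRel.left (k := k) (E := E) (F := F) i j)
    rw [Matrix.map_apply, this]
    simp only [Matrix.one_apply]; split_ifs <;> simp
  · ext i j
    have := RingQuot.mkAlgHom_rel k (BRel.right (k := k) (E := E) (F := F) i j)
    rw [Matrix.map_apply, this]
    simp only [Matrix.one_apply]; split_ifs <;> simp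

lemma exists_lift {m n : ℕ} (E : Matrix (Fin m) (Fin m) k) (F : Matrix (Fin n) (Fin n) k)
    {A : Type} [Semiring A] [Algebra k A] (W : Matrix (Fin m) (Fin n) A)
    (h1 : liftMat k (A := A) F⁻¹ * Wᵀ * liftMat k (A := A) E * W = 1)
    (h2 : W * liftMat k (A := A) F⁻¹ * Wᵀ * liftMat k (A := A) E = 1) :
    ∃ f : BB k E F →ₐ[k] A, ∀ i j, f (ZMat k E F i j) = W i j := by
  let g : FreeAlgebra k (Fin m × Fin n) →ₐ[k] A := FreeAlgebra.lift k fun p => W p.1 p.2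
  have hg : (gens k m n).map g = W := by ext i j; simp [g, gens]
  have hg' : (gens k m n)ᵀ.map g = Wᵀ := by rw [Matrix.transpose_map, hg]
  have hr : ∀ ⦃x y⦄, BRel k E F x y → g x = g y := by
    intro x y h
    cases h with
    | left i j =>
      rw [← Matrix.map_apply (f := g), ← Matrix.map_apply (f := g)]
      simp only [Matrix.map_mul, liftMat_map, hg, hg', h1]
      simp only [Matrix.map_apply, Matrix.one_apply]; split_ifs <;> simp
    | right i j =>
      rw [← Matrix.map_apply (f := g), ← Matrix.map_apply (f := g)]
      simp only [Matrix.map_mul, liftMat_map, hg, hg', h2]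
      simp only [Matrix.map_apply, Matrix.one_apply]; split_ifs <;> simp
  refine ⟨RingQuot.liftAlgHom k ⟨g, hr⟩, fun i j => ?_⟩
  simp only [ZMat, Matrix.of_apply, RingQuot.liftAlgHom_mkAlgHom_apply]
  simp [g, gens]

lemma exists_liftOp {m n : ℕ} (E : Matrix (Fin m) (Fin m) k) (F : Matrix (Fin n) (Fin n) k)
    {C : Type} [Semiring C] [Algebra k C] (W : Matrix (Fin m) (Fin n) C)
    (h1 : Wᵀ * (liftMat k (A := C) Eᵀ * (W * liftMat k (A := C) F⁻¹ᵀ)) = 1)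
    (h2 : liftMat k (A := C) Eᵀ * (W * (liftMat k (A := C) F⁻¹ᵀ * Wᵀ)) = 1) :
    ∃ f : BB k E F →ₐ[k] Cᵐᵒᵖ, ∀ i j, f (ZMat k E F i j) = MulOpposite.op (W i j) := by
  have e1 : W.map MulOpposite.op = opT Wᵀ := rfl
  have e2 : (opT Wᵀ)ᵀ = opT W := rfl
  apply exists_lift k E F (W.map MulOpposite.op)
  · rw [e1, e2, opT_liftMat, opT_liftMat, opT_mul, opT_mul, opT_mul, h1, opT_one]
  · rw [e1, e2, opT_liftMat, opT_liftMat, opT_mul, opT_mul, opT_mul, h2, opT_one]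

lemma op_apply {A C : Type} [Semiring A] [Algebra k A] [Semiring C] [Algebra k C]
    (f : A →ₐ[k] Cᵐᵒᵖ) {p q r s : ℕ} (P : Matrix (Fin p) (Fin q) k)
    (Y : Matrix (Fin q) (Fin r) A) (Q : Matrix (Fin r) (Fin s) k)
    (V : Matrix (Fin q) (Fin r) C) (h : ∀ i j, f (Y i j) = MulOpposite.op (V i j)) (i j) :
    f ((liftMat k (A := A) P * Y * liftMat k (A := A) Q) i j) =
      MulOpposite.op ((liftMat k (A := C) P * V * liftMat k (A := C) Q) i j) := by
  apply MulOpposite.unop_injective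
  simp only [Matrix.mul_apply, liftMat, Matrix.map_apply, map_sum, map_mul, h, AlgHom.commutes,
    MulOpposite.unop_op, MulOpposite.unop_mul,
    MulOpposite.algebraMap_apply, Finset.unop_sum]
  refine Finset.sum_congr rfl fun x _ => ?_
  rw [Algebra.commutes]
  congr 1
  exact Finset.sum_congr rfl fun y _ => (Algebra.commutes _ _).symm

lemma BB_hom_ext {m n : ℕ} (E : Matrix (Fin m) (Fin m) k) (F : Matrix (Fin n) (Fin n) k)
    {A : Type} [Semiring A] [Algebra k A] (f g : BB k E F →ₐ[k] A)
    (h : ∀ i j, f (ZMat k E F i j) = g (ZMat k E F i j)) : f = g := by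
  apply RingQuot.ringQuot_ext'
  apply FreeAlgebra.hom_ext
  funext p
  exact h p.1 p.2

lemma lm_tr {A : Type} [Semiring A] [Algebra k A] {p q r s : ℕ} (P : Matrix (Fin p) (Fin q) k)
    (Y : Matrix (Fin q) (Fin r) A) (Q : Matrix (Fin r) (Fin s) k) :
    (liftMat k (A := A) P * Y * liftMat k (A := A) Q)ᵀ = liftMat k (A := A) Qᵀ * Yᵀ * liftMat k (A := A) Pᵀ := by
  ext i j
  simp only [Matrix.mul_apply, liftMat, Matrix.map_apply, Matrix.transpose_apply,
    Finset.sum_mul]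
  rw [Finset.sum_comm]
  refine Finset.sum_congr rfl fun x _ => Finset.sum_congr rfl fun y _ => ?_
  rw [← Algebra.commutes (Q _ _), ← Algebra.commutes (P _ _), ← mul_assoc, ← mul_assoc,
    ← map_mul, ← map_mul, mul_comm]

lemma canc {A : Type} [Semiring A] [Algebra k A] {p q : ℕ} {M N : Matrix (Fin p) (Fin p) k}
    (h : M * N = 1) (X : Matrix (Fin p) (Fin q) A) :
    liftMat k (A := A) M * (liftMat k (A := A) N * X) = X := by
  rw [← Matrix.mul_assoc, liftMat_mul', h, liftMat_one', Matrix.one_mul]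

lemma canc0 {A : Type} [Semiring A] [Algebra k A] {p : ℕ} {M N : Matrix (Fin p) (Fin p) k}
    (h : M * N = 1) :
    (liftMat k (A := A) M : Matrix _ _ A) * liftMat k (A := A) N = 1 := by
  rw [liftMat_mul', h, liftMat_one']

/-- **Statement 6.** There is an algebra isomorphism `φ : B(F,E) → B(E,F)ᵒᵖ`
determined on generators by `φ(y) = F⁻¹ · ᵀz · E` entrywise. -/
theorem BB_op_iso {m n : ℕ}
    (E : Matrix (Fin m) (Fin m) k) (F : Matrix (Fin n) (Fin n) k)
    (hE : IsUnit E.det) (hF : IsUnit F.det) :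
    ∃ φ : BB k F E ≃ₐ[k] (BB k E F)ᵐᵒᵖ,
      ∀ i j, φ (ZMat k F E i j) = MulOpposite.op
        ((liftMat k (A := BB k E F) F⁻¹ * (ZMat k E F)ᵀ * liftMat k (A := BB k E F) E :
          Matrix (Fin n) (Fin m) (BB k E F)) i j) := by
  have E1 : E * E⁻¹ = 1 := Matrix.mul_nonsing_inv _ hE
  have E2 : E⁻¹ * E = 1 := Matrix.nonsing_inv_mul _ hE
  have F1 : F * F⁻¹ = 1 := Matrix.mul_nonsing_inv _ hF
  have F2 : F⁻¹ * F = 1 := Matrix.nonsing_inv_mul _ hF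
  have E3 : Eᵀ * E⁻¹ᵀ = 1 := by rw [← Matrix.transpose_mul, E2, Matrix.transpose_one]
  have E4 : E⁻¹ᵀ * Eᵀ = 1 := by rw [← Matrix.transpose_mul, E1, Matrix.transpose_one]
  have F3 : Fᵀ * F⁻¹ᵀ = 1 := by rw [← Matrix.transpose_mul, F2, Matrix.transpose_one]
  have F4 : F⁻¹ᵀ * Fᵀ = 1 := by rw [← Matrix.transpose_mul, F1, Matrix.transpose_one]
  obtain ⟨z1, z2⟩ := Z_rel k E F
  obtain ⟨y1, y2⟩ := Z_rel k F E
  obtain ⟨φ, hφ⟩ := exists_liftOp k F E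
    (liftMat k (A := BB k E F) F⁻¹ * (ZMat k E F)ᵀ * liftMat k (A := BB k E F) E) (by
      rw [lm_tr, Matrix.transpose_transpose]
      have : ∀ X : Matrix (Fin m) (Fin m) (BB k E F), ZMat k E F * (liftMat k (A := BB k E F) F⁻¹ *
          ((ZMat k E F)ᵀ * (liftMat k (A := BB k E F) E * X))) = X := by
        intro X
        simp only [← Matrix.mul_assoc]; rw [z2, Matrix.one_mul]
      simp only [Matrix.mul_assoc, canc k F4, this, canc0 k E3]) (by
      rw [lm_tr, Matrix.transpose_transpose]
      have : ∀ X : Matrix (Fin n) (Fin n) (BB k E F), liftMat k (A := BB k E F) F⁻¹ *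
          ((ZMat k E F)ᵀ * (liftMat k (A := BB k E F) E * (ZMat k E F * X))) = X := by
        intro X
        simp only [← Matrix.mul_assoc]; rw [z1, Matrix.one_mul]
      simp only [Matrix.mul_assoc, canc k E4, this, canc0 k F3])
  obtain ⟨ψ, hψ⟩ := exists_liftOp k E F
    (liftMat k (A := BB k F E) E⁻¹ᵀ * (ZMat k F E)ᵀ * liftMat k (A := BB k F E) Fᵀ) (by
      rw [lm_tr, Matrix.transpose_transpose]
      have : ZMat k F E * (liftMat k (A := BB k F E) E⁻¹ * (ZMat k F E)ᵀ) = liftMat k (A := BB k F E) F⁻¹ := by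
        have h := congrArg (· * (liftMat k (A := BB k F E) F⁻¹ : Matrix _ _ (BB k F E))) y2
        simpa only [Matrix.mul_assoc, canc0 k F1, Matrix.mul_one, Matrix.one_mul] using h
      simp only [Matrix.mul_assoc, canc k E3, canc0 k F3, Matrix.mul_one, this,
        Matrix.transpose_transpose, canc0 k F1]) (by
      rw [lm_tr, Matrix.transpose_transpose]
      have : (ZMat k F E)ᵀ * (liftMat k (A := BB k F E) F * ZMat k F E) = liftMat k (A := BB k F E) E := by
        have h := congrArg ((liftMat k (A := BB k F E) E : Matrix _ _ (BB k F E)) * ·) y1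
        simpa only [Matrix.mul_assoc, canc k E1, Matrix.mul_one, Matrix.one_mul] using h
      have h' : ∀ X : Matrix (Fin m) (Fin m) (BB k F E),
          (ZMat k F E)ᵀ * (liftMat k (A := BB k F E) F * (ZMat k F E * X)) = liftMat k (A := BB k F E) E * X := by
        intro X
        rw [← this]; simp only [Matrix.mul_assoc]
      simp only [Matrix.mul_assoc, canc k E3, canc k F3, canc k F4,
        Matrix.transpose_transpose, h', canc0 k E1])
  have c1 : (AlgHom.opComm ψ).comp φ = AlgHom.id k _ := by
    apply BB_hom_ext
    intro i j
    have h := op_apply k ψ F⁻¹ (ZMat k E F)ᵀ E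
      (liftMat k (A := BB k F E) E⁻¹ᵀ * (ZMat k F E)ᵀ * liftMat k (A := BB k F E) Fᵀ)ᵀ
      (fun i j => hψ j i) i j
    rw [AlgHom.comp_apply, hφ]
    refine (congrArg MulOpposite.unop h).trans ?_
    rw [lm_tr]
    simp only [Matrix.mul_assoc, Matrix.transpose_transpose, canc k F2, canc0 k E2,
      Matrix.mul_one]
    rfl
  have c2 : (AlgHom.opComm φ).comp ψ = AlgHom.id k _ := by
    apply BB_hom_ext
    intro i j
    have h := op_apply k φ E⁻¹ᵀ (ZMat k F E)ᵀ Fᵀ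
      (liftMat k (A := BB k E F) F⁻¹ * (ZMat k E F)ᵀ * liftMat k (A := BB k E F) E)ᵀ
      (fun i j => hφ j i) i j
    rw [AlgHom.comp_apply, hψ]
    refine (congrArg MulOpposite.unop h).trans ?_
    rw [lm_tr]
    simp only [Matrix.mul_assoc, Matrix.transpose_transpose, canc k E4, canc0 k F4,
      Matrix.mul_one]
    rfl
  refine ⟨AlgEquiv.ofAlgHom φ (AlgHom.opComm ψ) ?_ c1, hφ⟩
  apply AlgHom.ext
  intro x
  apply MulOpposite.unop_injective
  exact DFunLike.congr_fun c2 x.unop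
end
end

section
/- Let q ∈ k* and let F ∈ GL(n,k) with n ≥ 2, and assume that q² + tr(F·ᵀF⁻¹)·q + 1 = 0. Then the 2n images of the generators z_{ij} (1 ≤ i ≤ 2, 1 ≤ j ≤ n) in B(E_q, F) are linearly independent over k. -/
open scoped TensorProduct
open Matrix

noncomputable section

variable (k : Type) [Field k]

/-- The matrix `E_q` with rows `(0, 1)` and `(−q⁻¹, 0)`, so that `B(E_q) = O(SL_q(2))`. -/
def Eqm (q : k) : Matrix (Fin 2) (Fin 2) k := !![0, 1; -q⁻¹, 0]
namespace BBaux

section rep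

variable {K : Type} [Field K] {n : ℕ}

abbrev T (K : Type) [Field K] (n : ℕ) := FreeAlgebra K (Fin n)

abbrev x (K : Type) [Field K] {n : ℕ} (i : Fin n) : T K n := FreeAlgebra.ι K i

theorem mem_of_left (Q : Submodule K (T K n)) (h1 : (1 : T K n) ∈ Q)
    (hx : ∀ m w, w ∈ Q → x K m * w ∈ Q) (t : T K n) : t ∈ Q := by
  have key : ∀ t : T K n, ∀ w, w ∈ Q → t * w ∈ Q := by
    intro t
    induction t using FreeAlgebra.induction with
    | grade0 r =>
      intro w hw
      rw [← Algebra.smul_def]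
      exact Q.smul_mem _ hw
    | grade1 m => exact hx m
    | mul a b ha hb =>
      intro w hw
      rw [mul_assoc]
      exact ha _ (hb _ hw)
    | add a b ha hb =>
      intro w hw
      rw [add_mul]
      exact Q.add_mem (ha _ hw) (hb _ hw)
  simpa using key t 1 h1

def op (q : K) (F : Matrix (Fin n) (Fin n) K) (j : Fin n) :
    Module.End K (T K n × (Fin n → T K n)) where
  toFun s := (x K j * s.1, fun i => q • (x K i * s.2 j) - (q * F i j) • s.1)
  map_add' s t := by
    ext i
    · simp [mul_add]
    · simp only [Prod.snd_add, Prod.fst_add, Pi.add_apply, mul_add, smul_add]; abel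
  map_smul' c s := by
    ext i
    · simp
    · simp only [Prod.smul_snd, Prod.smul_fst, Pi.smul_apply, mul_smul_comm, smul_sub,
        RingHom.id_apply]
      rw [smul_comm c q, smul_comm c (q * F i j)]

def rho (q : K) (F : Matrix (Fin n) (Fin n) K) :
    T K n →ₐ[K] Module.End K (T K n × (Fin n → T K n)) :=
  FreeAlgebra.lift K (op q F)

theorem rho_fst (q : K) (F : Matrix (Fin n) (Fin n) K) (t : T K n) :
    ∀ s, (rho q F t s).1 = t * s.1 := by
  induction t using FreeAlgebra.induction with
  | grade0 r => intro s; simp [Algebra.smul_def, Module.algebraMap_end_apply]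
  | grade1 m => intro s; simp [rho, op]
  | mul a b ha hb => intro s; simp [ha, hb, mul_assoc]
  | add a b ha hb => intro s; simp [ha, hb, add_mul]

def bb (q : K) (F : Matrix (Fin n) (Fin n) K) (β : Fin n → K) (i : Fin n) :
    T K n →ₗ[K] T K n where
  toFun t := (rho q F t (1, fun i => algebraMap K _ (β i))).2 i
  map_add' a b := by simp
  map_smul' a b := by simp

theorem bb_one (q : K) (F : Matrix (Fin n) (Fin n) K) (β : Fin n → K) (i : Fin n) :
    bb q F β i 1 = algebraMap K _ (β i) := by
  simp [bb]

theorem bb_mul (q : K) (F : Matrix (Fin n) (Fin n) K) (β : Fin n → K) (i j : Fin n)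
    (w : T K n) :
    bb q F β i (x K j * w) = q • (x K i * bb q F β j w) - (q * F i j) • w := by
  have h := rho_fst q F w (1, fun i => algebraMap K _ (β i))
  simp only [mul_one] at h
  simp only [bb, LinearMap.coe_mk, AddHom.coe_mk, map_mul, Module.End.mul_apply]
  have h2 : rho q F (x K j) = op q F j := by simp [rho]
  rw [h2]
  simp only [op, LinearMap.coe_mk, AddHom.coe_mk, h]

def gg (G : Matrix (Fin n) (Fin n) K) : T K n := ∑ i, ∑ j, G i j • (x K i * x K j)

def lam (q : K) (G : Matrix (Fin n) (Fin n) K) (β : Fin n → K) : T K n :=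
  (∑ i, ∑ j, (G i j * β j) • x K i) + algebraMap K _ q

def N (q : K) (G : Matrix (Fin n) (Fin n) K) (β : Fin n → K) : Submodule (T K n) (T K n) :=
  Submodule.span (T K n) (Set.range (fun t => gg G * t) ∪ {lam q G β})

def NK (q : K) (G : Matrix (Fin n) (Fin n) K) (β : Fin n → K) : Submodule K (T K n) :=
  (N q G β).restrictScalars K

variable {q : K} {G F : Matrix (Fin n) (Fin n) K} {β : Fin n → K}

theorem N_mul {y : T K n} (t : T K n) (hy : y ∈ NK q G β) : t * y ∈ NK q G β :=
  (N q G β).smul_mem t hy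

theorem gg_mem (t : T K n) : gg G * t ∈ NK q G β :=
  Submodule.subset_span (Or.inl ⟨t, rfl⟩)

theorem lam_mem : lam q G β ∈ NK q G β :=
  Submodule.subset_span (Or.inr rfl)

/-- `G(a,b)` -/
def Hab (q : K) (G F : Matrix (Fin n) (Fin n) K) (β : Fin n → K) : T K n →ₗ[K] T K n :=
  ∑ i, ∑ j, G i j • (LinearMap.mulLeft K (x K i) ∘ₗ bb q F β j)

theorem Hab_apply (t : T K n) :
    Hab q G F β t = ∑ i, ∑ j, G i j • (x K i * bb q F β j t) := by
  simp [Hab, LinearMap.sum_apply]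

theorem sum_GF (hGF : G * F = 1) (f : Fin n → T K n) (m : Fin n) :
    ∑ i, ∑ j, (G i j * F j m) • f i = f m := by
  have : ∀ i, ∑ j, G i j * F j m = if i = m then 1 else 0 := by
    intro i
    have := congrFun (congrFun hGF i) m
    rwa [Matrix.mul_apply, Matrix.one_apply] at this
  simp [← Finset.sum_smul, this]

theorem sum_FG (hFG : F * G = 1) (f : Fin n → T K n) (m : Fin n) :
    ∑ i, ∑ j, (F m i * G i j) • f j = f m := by
  have : ∀ j, ∑ i, F m i * G i j = if m = j then 1 else 0 := by
    intro j
    have := congrFun (congrFun hFG m) j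
    rwa [Matrix.mul_apply, Matrix.one_apply] at this
  rw [Finset.sum_comm]
  simp [← Finset.sum_smul, this]

theorem Hab_mem (hGF : G * F = 1) (t : T K n) : Hab q G F β t + q • t ∈ NK q G β := by
  refine mem_of_left ((NK q G β).comap (Hab q G F β + q • LinearMap.id)) ?_ ?_ t
  · have : Hab q G F β 1 + q • (1 : T K n) = lam q G β := by
      rw [Hab_apply, lam, Algebra.algebraMap_eq_smul_one]
      simp only [bb_one, Algebra.algebraMap_eq_smul_one, mul_smul_comm, mul_one, smul_smul]
    simpa [this] using lam_mem
  · intro m w _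
    have : Hab q G F β (x K m * w) + q • (x K m * w) = q • (gg G * bb q F β m w) := by
      rw [Hab_apply]
      simp only [bb_mul, mul_sub, smul_sub, Finset.sum_sub_distrib, mul_smul_comm]
      have h2 : ∑ i, ∑ j, G i j • (q * F j m) • (x K i * w) = q • (x K m * w) := by
        rw [← sum_GF hGF (fun i => x K i * w) m, Finset.smul_sum]
        refine Finset.sum_congr rfl fun i _ => ?_
        rw [Finset.smul_sum]
        refine Finset.sum_congr rfl fun j _ => ?_
        rw [smul_smul, smul_smul]; congr 1; ring
      rw [h2, sub_add_cancel, gg, Finset.sum_mul, Finset.smul_sum]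
      refine Finset.sum_congr rfl fun i _ => ?_
      rw [Finset.sum_mul, Finset.smul_sum]
      refine Finset.sum_congr rfl fun j _ => ?_
      rw [smul_mul_assoc, smul_comm, mul_assoc]
    simp only [Submodule.mem_comap, LinearMap.add_apply, LinearMap.smul_apply, LinearMap.id_apply]
    rw [this]
    exact Submodule.smul_mem _ _ (gg_mem _)

/-- `G(b,a) - 1` -/
theorem Hba_mem (hGF : G * F = 1) (htr : q ^ 2 + (∑ i, ∑ j, G i j * F i j) * q + 1 = 0)
    (t : T K n) : (∑ i, ∑ j, G i j • bb q F β i (x K j * t)) - t ∈ NK q G β := by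
  have : (∑ i, ∑ j, G i j • bb q F β i (x K j * t)) - t = q • (Hab q G F β t + q • t) := by
    simp only [bb_mul, smul_sub, Finset.sum_sub_distrib, smul_add, Hab_apply, Finset.smul_sum]
    have h2 : ∑ i, ∑ j, G i j • (q * F i j) • t = ((∑ i, ∑ j, G i j * F i j) * q) • t := by
      simp only [Finset.sum_smul, Finset.sum_mul]
      refine Finset.sum_congr rfl fun i _ => Finset.sum_congr rfl fun j _ => ?_
      rw [smul_smul]; congr 1; ring
    have h3 : ∑ i, ∑ j, G i j • q • (x K i * bb q F β j t)
        = ∑ i, ∑ j, q • G i j • (x K i * bb q F β j t) :=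
      Finset.sum_congr rfl fun i _ => Finset.sum_congr rfl fun j _ => smul_comm _ _ _
    have h4 : (∑ i, ∑ j, G i j * F i j) * q = - q ^ 2 - 1 := by linear_combination htr
    rw [h2, h3, h4, sub_sub, smul_smul, sub_smul, neg_smul, one_smul, pow_two]
    abel
  rw [this]
  exact Submodule.smul_mem _ _ (Hab_mem hGF t)

theorem bb_N (hGF : G * F = 1) (hFG : F * G = 1)
    (htr : q ^ 2 + (∑ i, ∑ j, G i j * F i j) * q + 1 = 0)
    (hβ : ∑ i, ∑ j, G i j * (β i * β j) = 0) (y : T K n) (hy : y ∈ NK q G β) (i : Fin n) :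
    bb q F β i y ∈ NK q G β := by
  have key : ∀ r : T K n, ∀ y, y ∈ NK q G β → (∀ i, bb q F β i y ∈ NK q G β) →
      ∀ i, bb q F β i (r * y) ∈ NK q G β := by
    intro r
    induction r using FreeAlgebra.induction with
    | grade0 r =>
      intro y _ h i
      rw [← Algebra.smul_def, map_smul]
      exact Submodule.smul_mem _ _ (h i)
    | grade1 m =>
      intro y hy h i
      rw [bb_mul]
      exact Submodule.sub_mem _ (Submodule.smul_mem _ _ (N_mul _ (h m)))
        (Submodule.smul_mem _ _ hy)
    | mul a b ha hb =>
      intro y hy h i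
      rw [mul_assoc]
      exact ha _ (N_mul _ hy) (hb _ hy h) i
    | add a b ha hb =>
      intro y hy h i
      rw [add_mul, map_add]
      exact Submodule.add_mem _ (ha _ hy h i) (hb _ hy h i)
  have hy' : y ∈ Submodule.span (T K n) (Set.range (fun t => gg G * t) ∪ {lam q G β}) := hy
  clear hy
  revert i
  induction hy' using Submodule.span_induction with
  | mem y hy =>
    intro i
    rcases hy with ⟨t, rfl⟩ | hy
    · have : bb q F β i (gg G * t) =
          q • (x K i * ((∑ j, ∑ l, G j l • bb q F β j (x K l * t)) - t)) := by
        simp only [gg, Finset.sum_mul, smul_mul_assoc, mul_assoc, map_sum, map_smul, bb_mul _ _ _ i,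
          smul_sub, Finset.sum_sub_distrib, mul_sub, Finset.mul_sum, mul_smul_comm,
          Finset.smul_sum]
        congr 1
        · exact Finset.sum_congr rfl fun i _ => Finset.sum_congr rfl fun j _ => smul_comm _ _ _
        · rw [← sum_FG hFG (fun l => x K l * t) i, Finset.smul_sum]
          refine Finset.sum_congr rfl fun i _ => ?_
          rw [Finset.smul_sum]
          refine Finset.sum_congr rfl fun j _ => ?_
          rw [smul_smul, smul_smul]; congr 1; ring
      change bb q F β i (gg G * t) ∈ _
      rw [this]
      exact Submodule.smul_mem _ _ (N_mul _ (Hba_mem hGF htr t))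
    · rw [Set.mem_singleton_iff] at hy
      subst hy
      have : bb q F β i (lam q G β) = 0 := by
        have hx : ∀ j, bb q F β i (x K j) = (q * β j) • x K i - (q * F i j) • 1 := by
          intro j
          have := bb_mul q F β i j 1
          rwa [mul_one, bb_one, Algebra.algebraMap_eq_smul_one, mul_smul_comm, mul_one,
            smul_smul] at this
        rw [lam, map_add, Algebra.algebraMap_eq_smul_one, map_smul, bb_one]
        simp only [map_sum, map_smul, hx, smul_sub, Finset.sum_sub_distrib, smul_smul]
        have h1 : ∑ j, ∑ l, (G j l * β l * (q * β j)) • x K i = 0 := by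
          simp only [← Finset.sum_smul]
          have : ∑ j, ∑ l, G j l * β l * (q * β j) = q * ∑ j, ∑ l, G j l * (β j * β l) := by
            simp only [Finset.mul_sum]
            exact Finset.sum_congr rfl fun i _ => Finset.sum_congr rfl fun j _ => by ring
          rw [this, hβ, mul_zero, zero_smul]
        have h2 : ∑ j, ∑ l, (G j l * β l * (q * F i j)) • (1 : T K n) = (q * β i) • 1 := by
          have := sum_FG hFG (fun l => β l • (1 : T K n)) i
          rw [mul_smul, ← this, Finset.smul_sum]
          refine Finset.sum_congr rfl fun i _ => ?_
          rw [Finset.smul_sum]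
          refine Finset.sum_congr rfl fun j _ => ?_
          rw [smul_smul, smul_smul]; congr 1; ring
        rw [h1, h2, Algebra.algebraMap_eq_smul_one, smul_smul]
        abel
      rw [this]
      exact Submodule.zero_mem _
  | zero => intro i; rw [map_zero]; exact Submodule.zero_mem _
  | add a b _ _ ha hb => intro i; rw [map_add]; exact Submodule.add_mem _ (ha i) (hb i)
  | smul r y hy h => exact key r y hy h

theorem Hbb_mem (hGF : G * F = 1)
    (htr : q ^ 2 + (∑ i, ∑ j, G i j * F i j) * q + 1 = 0)
    (hβ : ∑ i, ∑ j, G i j * (β i * β j) = 0) (t : T K n) :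
    (∑ i, ∑ j, G i j • bb q F β i (bb q F β j t)) ∈ NK q G β := by
  have hL : ∀ t, (∑ i, ∑ j, G i j • (bb q F β i ∘ₗ bb q F β j)) t
      = ∑ i, ∑ j, G i j • bb q F β i (bb q F β j t) := by
    intro t; simp [LinearMap.sum_apply]
  rw [← hL]
  refine mem_of_left ((NK q G β).comap (∑ i, ∑ j, G i j • (bb q F β i ∘ₗ bb q F β j))) ?_ ?_ t
  · rw [Submodule.mem_comap, hL]
    have : ∑ i, ∑ j, G i j • bb q F β i (bb q F β j 1) =
        (∑ i, ∑ j, G i j * (β i * β j)) • (1 : T K n) := by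
      simp only [Finset.sum_smul]
      refine Finset.sum_congr rfl fun i _ => Finset.sum_congr rfl fun j _ => ?_
      rw [bb_one, Algebra.algebraMap_eq_smul_one, map_smul, bb_one,
        Algebra.algebraMap_eq_smul_one, smul_smul, smul_smul]
      congr 1; ring
    rw [this, hβ, zero_smul]
    exact Submodule.zero_mem _
  · intro m w _
    rw [Submodule.mem_comap, hL]
    have : ∑ i, ∑ j, G i j • bb q F β i (bb q F β j (x K m * w)) =
        q • ((∑ i, ∑ j, G i j • bb q F β i (x K j * bb q F β m w)) - bb q F β m w) := by
      simp only [bb_mul _ _ _ _ m, map_sub, map_smul, smul_sub, Finset.sum_sub_distrib,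
        Finset.smul_sum]
      congr 1
      · exact Finset.sum_congr rfl fun i _ => Finset.sum_congr rfl fun j _ => smul_comm _ _ _
      · rw [← sum_GF hGF (fun l => bb q F β l w) m, Finset.smul_sum]
        refine Finset.sum_congr rfl fun i _ => ?_
        rw [Finset.smul_sum]
        refine Finset.sum_congr rfl fun j _ => ?_
        rw [smul_smul, smul_smul]; congr 1; ring
    rw [this]
    exact Submodule.smul_mem _ _ (Hba_mem hGF htr _)

/-! ### the functional -/

def ee (C d e0 : K) : ℕ → K
  | 0 => e0
  | m + 1 => - C * ee C d e0 m - d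

def psiop (β η : Fin n → K) (e : ℕ → K) (i : Fin n) : Module.End K (ℕ → K) where
  toFun f := fun m => (β i * e m + η i) * f (m + 1)
  map_add' f g := by ext m; simp [mul_add]
  map_smul' c f := by ext m; simp; ring

theorem exists_eta (hFG : F * G = 1) (hβ0 : β ≠ 0) :
    ∃ η : Fin n → K, ∑ i, ∑ j, G i j * (η i * β j) = 1 := by
  have h : G.mulVec β ≠ 0 := by
    intro h
    apply hβ0
    have := congrArg F.mulVec h
    simpa [Matrix.mulVec_mulVec, hFG] using this
  obtain ⟨i, hi⟩ := Function.ne_iff.mp h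
  refine ⟨Pi.single i ((G.mulVec β i)⁻¹), ?_⟩
  rw [Finset.sum_eq_single i]
  · simp only [Pi.single_eq_same]
    have : ∑ j, G i j * ((G.mulVec β i)⁻¹ * β j) = (G.mulVec β i)⁻¹ * G.mulVec β i := by
      conv_rhs => rw [Matrix.mulVec, dotProduct, Finset.mul_sum]
      exact Finset.sum_congr rfl fun j _ => by rw [Matrix.mulVec, dotProduct]; ring
    rw [this]
    exact inv_mul_cancel₀ hi
  · intro b _ hb
    simp [Pi.single_eq_of_ne hb]
  · simp

theorem psi_kill {η : Fin n → K} (hβ : ∑ i, ∑ j, G i j * (β i * β j) = 0)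
    (hη : ∑ i, ∑ j, G i j * (η i * β j) = 1) (e0 : K) :
    ∀ t ∈ NK q G β, FreeAlgebra.lift K (psiop β η (ee (∑ i, ∑ j, G i j * (β i * η j))
      (∑ i, ∑ j, G i j * (η i * η j)) e0)) t (fun m => (-q) ^ m) = 0 := by
  intro t ht
  set C := ∑ i, ∑ j, G i j * (β i * η j) with hC
  set d := ∑ i, ∑ j, G i j * (η i * η j) with hd
  have ht' : t ∈ Submodule.span (T K n) (Set.range (fun t => gg G * t) ∪ {lam q G β}) := ht
  clear ht
  induction ht' using Submodule.span_induction with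
  | mem y hy =>
    rcases hy with ⟨t, rfl⟩ | hy
    · have : FreeAlgebra.lift K (psiop β η (ee C d e0)) (gg G) = 0 := by
        ext f m
        simp only [gg, map_sum, map_smul, map_mul, FreeAlgebra.lift_ι_apply, LinearMap.sum_apply,
          LinearMap.smul_apply, Module.End.mul_apply, Finset.sum_apply, Pi.smul_apply,
          smul_eq_mul, LinearMap.zero_apply, Pi.zero_apply]
        have : ∀ i j, G i j * (psiop β η (ee C d e0) i (psiop β η (ee C d e0) j f) m)
          = (G i j * (β i * β j)) * (ee C d e0 m * ee C d e0 (m+1) * f (m+2))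
            + (G i j * (β i * η j)) * (ee C d e0 m * f (m+2))
            + (G i j * (η i * β j)) * (ee C d e0 (m+1) * f (m+2))
            + (G i j * (η i * η j)) * f (m+2) := by
          intro i j
          simp only [psiop, LinearMap.coe_mk, AddHom.coe_mk]
          ring
        simp only [this, Finset.sum_add_distrib, ← Finset.sum_mul]
        rw [hβ, hη, ← hC, ← hd]
        simp only [ee]
        ring
      simp [this]
    · rw [Set.mem_singleton_iff] at hy
      subst hy
      ext m
      simp only [lam, map_add, map_sum, map_smul, FreeAlgebra.lift_ι_apply, LinearMap.sum_apply,
        LinearMap.add_apply, AlgHom.commutes, Module.algebraMap_end_apply,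
        LinearMap.smul_apply, Finset.sum_apply, Pi.smul_apply, Pi.add_apply,
          smul_eq_mul, Pi.zero_apply]
      have : ∀ i j, G i j * β j * (psiop β η (ee C d e0) i (fun m => (-q) ^ m) m)
          = (G i j * (β i * β j)) * (ee C d e0 m * (-q)^(m+1))
            + (G i j * (η i * β j)) * (-q)^(m+1) := by
          intro i j
          simp only [psiop, LinearMap.coe_mk, AddHom.coe_mk]
          ring
      simp only [this, Finset.sum_add_distrib, ← Finset.sum_mul]
      rw [hβ, hη]
      ring
  | zero => simp
  | add a b _ _ ha hb => simp [ha, hb]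
  | smul r y hy h => simp [h]

theorem one_notMem (hFG : F * G = 1) (hβ0 : β ≠ 0) (hβ : ∑ i, ∑ j, G i j * (β i * β j) = 0)
    (c : K) (hc : c • (1 : T K n) ∈ NK q G β) : c = 0 := by
  obtain ⟨η, hη⟩ := exists_eta hFG hβ0
  have := congrFun (psi_kill hβ hη 0 _ hc) 0
  simpa using this

theorem lin_mem (hq : q ≠ 0) (hFG : F * G = 1) (hβ0 : β ≠ 0)
    (hβ : ∑ i, ∑ j, G i j * (β i * β j) = 0)
    (α : Fin n → K) (hc : ∑ i, α i • x K i ∈ NK q G β) : ∑ i, α i * β i = 0 := by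
  obtain ⟨η, hη⟩ := exists_eta hFG hβ0
  have h0 := congrFun (psi_kill hβ hη 0 _ hc) 0
  have h1 := congrFun (psi_kill hβ hη 1 _ hc) 0
  simp [psiop, LinearMap.sum_apply, Finset.sum_apply, ee] at h0 h1
  simp only [← mul_assoc, ← Finset.sum_mul, neg_eq_zero, mul_eq_zero, hq, or_false, mul_add, add_mul, Finset.sum_add_distrib, Finset.sum_neg_distrib, mul_one, mul_neg, neg_mul] at h0 h1
  simp_all

theorem lin_mem2 (hq : q ≠ 0) (hGF : G * F = 1) (hFG : F * G = 1)
    (htr : q ^ 2 + (∑ i, ∑ j, G i j * F i j) * q + 1 = 0) (hβ0 : β ≠ 0)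
    (hβ : ∑ i, ∑ j, G i j * (β i * β j) = 0)
    (α : Fin n → K) (hc : ∑ i, α i • x K i ∈ NK q G β) : α = 0 := by
  have h1 := lin_mem hq hFG hβ0 hβ α hc
  have h2 : F.mulVec α = 0 := by
    ext i
    have h3 := bb_N hGF hFG htr hβ _ hc i
    have hx : ∀ j, bb q F β i (x K j) = (q * β j) • x K i - (q * F i j) • 1 := by
      intro j
      have := bb_mul q F β i j 1
      rwa [mul_one, bb_one, Algebra.algebraMap_eq_smul_one, mul_smul_comm, mul_one,
        smul_smul] at this
    have h4 : bb q F β i (∑ i, α i • x K i) = (- (q * F.mulVec α i)) • (1 : T K n) := by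
      simp only [map_sum, map_smul, hx, smul_sub, Finset.sum_sub_distrib, smul_smul,
        ← Finset.sum_smul]
      have : ∑ j, α j * (q * β j) = q * ∑ j, α j * β j := by
        rw [Finset.mul_sum]; exact Finset.sum_congr rfl fun j _ => by ring
      rw [this, h1, mul_zero, zero_smul, zero_sub, neg_smul]
      congr 2
      rw [Matrix.mulVec, dotProduct, Finset.mul_sum]
      exact Finset.sum_congr rfl fun j _ => by ring
    rw [h4] at h3
    have := one_notMem hFG hβ0 hβ _ h3
    simpa [hq] using this
  have := congrArg G.mulVec h2
  simpa [Matrix.mulVec_mulVec, hGF] using this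

/-- the relations -/
structure Pt {A : Type} [Ring A] [Algebra K A] (q : K) (G F : Matrix (Fin n) (Fin n) K)
    (a b : Fin n → A) : Prop where
  ab : ∀ i j, a i * b j - q⁻¹ • (b i * a j) = F i j • 1
  haa : ∑ i, ∑ j, G i j • (a i * a j) = 0
  hab : ∑ i, ∑ j, G i j • (a i * b j) = (-q) • 1
  hba : ∑ i, ∑ j, G i j • (b i * a j) = 1
  hbb : ∑ i, ∑ j, G i j • (b i * b j) = 0

theorem exists_rep (hq : q ≠ 0) (hGF : G * F = 1) (hFG : F * G = 1)
    (htr : q ^ 2 + (∑ i, ∑ j, G i j * F i j) * q + 1 = 0) (hβ0 : β ≠ 0)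
    (hβ : ∑ i, ∑ j, G i j * (β i * β j) = 0) :
    ∃ (A : Type) (_ : Ring A) (_ : Algebra K A) (a b : Fin n → A), Pt q G F a b ∧
      ∀ α : Fin n → K, ∑ i, α i • a i = 0 → α = 0 := by
  let P := NK q G β
  let a : Fin n → Module.End K (T K n ⧸ P) := fun i =>
    P.mapQ P (LinearMap.mulLeft K (x K i)) (fun y hy => N_mul _ hy)
  let b : Fin n → Module.End K (T K n ⧸ P) := fun i =>
    P.mapQ P (bb q F β i) (fun y hy => bb_N hGF hFG htr hβ y hy i)
  have ha : ∀ i t, a i (P.mkQ t) = P.mkQ (x K i * t) := fun i t => rfl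
  have hb : ∀ i t, b i (P.mkQ t) = P.mkQ (bb q F β i t) := fun i t => rfl
  have hz : ∀ t, t ∈ P → P.mkQ t = 0 := fun t ht => (Submodule.Quotient.mk_eq_zero P).2 ht
  refine ⟨Module.End K (T K n ⧸ P), inferInstance, inferInstance, a, b, ⟨?_, ?_, ?_, ?_, ?_⟩, ?_⟩
  · intro i j
    refine Submodule.linearMap_qext _ (LinearMap.ext fun t => ?_)
    simp only [LinearMap.comp_apply, LinearMap.sub_apply, LinearMap.smul_apply,
      Module.End.mul_apply, ha, hb, Module.End.one_apply]
    rw [← map_smul P.mkQ, ← map_smul P.mkQ, ← map_sub P.mkQ]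
    congr 1
    rw [bb_mul, smul_sub, smul_smul, smul_smul, inv_mul_cancel₀ hq, one_smul, ← mul_assoc,
      inv_mul_cancel₀ hq, one_mul]
    abel
  · refine Submodule.linearMap_qext _ (LinearMap.ext fun t => ?_)
    simp only [LinearMap.comp_apply, LinearMap.sum_apply, LinearMap.smul_apply,
      Module.End.mul_apply, ha, hb, ← map_smul P.mkQ, ← map_sum P.mkQ, LinearMap.zero_apply]
    refine hz _ ?_
    have := gg_mem (q := q) (G := G) (β := β) t
    simpa [gg, Finset.sum_mul, mul_assoc] using this
  · refine Submodule.linearMap_qext _ (LinearMap.ext fun t => ?_)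
    simp only [LinearMap.comp_apply, LinearMap.sum_apply, LinearMap.smul_apply,
      Module.End.mul_apply, Module.End.one_apply, ha, hb, ← map_smul P.mkQ, ← map_sum P.mkQ]
    rw [← sub_eq_zero, ← map_sub]
    refine hz _ ?_
    have := Hab_mem (q := q) (β := β) hGF t
    rw [Hab_apply] at this
    rwa [neg_smul, sub_neg_eq_add]
  · refine Submodule.linearMap_qext _ (LinearMap.ext fun t => ?_)
    simp only [LinearMap.comp_apply, LinearMap.sum_apply, LinearMap.smul_apply,
      Module.End.mul_apply, Module.End.one_apply, ha, hb, ← map_smul P.mkQ, ← map_sum P.mkQ]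
    rw [← sub_eq_zero, ← map_sub]
    exact hz _ (Hba_mem hGF htr t)
  · refine Submodule.linearMap_qext _ (LinearMap.ext fun t => ?_)
    simp only [LinearMap.comp_apply, LinearMap.sum_apply, LinearMap.smul_apply,
      Module.End.mul_apply, ha, hb, ← map_smul P.mkQ, ← map_sum P.mkQ, LinearMap.zero_apply]
    exact hz _ (Hbb_mem hGF htr hβ t)
  · intro α h
    refine lin_mem2 hq hGF hFG htr hβ0 hβ α ?_
    have := congrArg (fun f => f (P.mkQ 1)) h
    simp only [LinearMap.sum_apply, LinearMap.smul_apply, ha, mul_one, LinearMap.zero_apply,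
      ← map_smul P.mkQ, ← map_sum P.mkQ] at this
    exact (Submodule.Quotient.mk_eq_zero P).1 this

theorem Pt.scale {A : Type} [Ring A] [Algebra K A] {a b : Fin n → A} (h : Pt q G F a b)
    {s : K} (hs : s ≠ 0) : Pt q G F (fun i => s • a i) (fun i => s⁻¹ • b i) := by
  have h1 : s * s⁻¹ = 1 := mul_inv_cancel₀ hs
  have h2 : s⁻¹ * s = 1 := inv_mul_cancel₀ hs
  constructor
  · intro i j
    simp only [smul_mul_smul_comm, h1, h2, one_smul, h.ab]
  · have := congrArg (fun y => (s * s) • y) h.haa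
    simp only [Finset.smul_sum, smul_zero] at this
    simpa only [smul_mul_smul_comm, smul_comm (s * s)] using this
  · simp only [smul_mul_smul_comm, h1, one_smul, h.hab]
  · simp only [smul_mul_smul_comm, h2, one_smul, h.hba]
  · have := congrArg (fun y => (s⁻¹ * s⁻¹) • y) h.hbb
    simp only [Finset.smul_sum, smul_zero] at this
    simpa only [smul_mul_smul_comm, smul_comm (s⁻¹ * s⁻¹)] using this

theorem Pt.swap (hq : q ≠ 0) {A : Type} [Ring A] [Algebra K A] {a b : Fin n → A}
    (h : Pt q⁻¹ G F a b) : Pt q G F (fun i => (-q) • b i) a := by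
  constructor
  · intro i j
    rw [← h.ab i j]
    rw [smul_mul_assoc, mul_smul_comm, smul_smul, inv_inv, mul_neg, inv_mul_cancel₀ hq,
      neg_smul, neg_smul, one_smul]
    abel
  · have := congrArg (fun y => (-q * -q) • y) h.hbb
    simp only [Finset.smul_sum, smul_zero] at this
    simpa only [smul_mul_smul_comm, smul_comm (-q * -q)] using this
  · have := congrArg (fun y => (-q) • y) h.hba
    simp only [Finset.smul_sum] at this
    simpa only [smul_mul_assoc, smul_comm (-q)] using this
  · have := congrArg (fun y => (-q) • y) h.hab
    simp only [Finset.smul_sum, smul_smul, neg_mul_neg, mul_inv_cancel₀ hq, one_smul] at this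
    simpa only [mul_smul_comm, smul_smul, mul_comm (-q)] using this
  · exact h.haa

end rep

section hom

variable {k : Type} [Field k] {n : ℕ} {q : k} {F : Matrix (Fin n) (Fin n) k}

theorem exists_hom (hq : q ≠ 0) (hF : IsUnit F.det) {A : Type} [Ring A] [Algebra k A]
    {a b : Fin n → A} (h : Pt q F⁻¹ F a b) :
    ∃ φ : BB k (Eqm k q) F →ₐ[k] A, ∀ j, φ (ZMat k (Eqm k q) F 0 j) = a j ∧
      φ (ZMat k (Eqm k q) F 1 j) = b j := by
  let z : Matrix (Fin 2) (Fin n) A := Matrix.of ![a, b]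
  let f : FreeAlgebra k (Fin 2 × Fin n) →ₐ[k] A := FreeAlgebra.lift k (fun p => z p.1 p.2)
  have hg : (gens k 2 n).map f = z := by
    ext i j; simp [gens, f]
  have hgT : ((gens k 2 n)ᵀ).map f = zᵀ := by
    rw [← hg]; rfl
  have hl : ∀ {p r : ℕ} (M : Matrix (Fin p) (Fin r) k),
      (liftMat k (A := FreeAlgebra k (Fin 2 × Fin n)) M).map f = liftMat k (A := A) M := by
    intro p r M; ext i j; simp [liftMat]
  have hlm : ∀ {p r s : ℕ} (M : Matrix (Fin p) (Fin r) k) (M' : Matrix (Fin r) (Fin s) k),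
      liftMat k (A := A) M * liftMat k (A := A) M' = liftMat k (A := A) (M * M') := by
    intro p r s M M'
    exact (Matrix.map_mul (f := algebraMap k A)).symm
  have hl1 : ∀ {p : ℕ}, liftMat k (A := A) (1 : Matrix (Fin p) (Fin p) k) = 1 := by
    intro p; simp [liftMat]
  have e1 : zᵀ * liftMat k (A := A) (Eqm k q) * z = liftMat k (A := A) F := by
    ext i j
    have := h.ab i j
    simp [Matrix.mul_apply, Fin.sum_univ_two, liftMat, Eqm, z]
    rw [Algebra.smul_def, Algebra.smul_def, mul_one] at this
    rw [← this, ← mul_assoc, Algebra.commutes]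
    abel
  have e2 : z * liftMat k (A := A) F⁻¹ * zᵀ = liftMat k (A := A) !![0, -q; 1, 0] := by
    have gen : ∀ i j, (z * liftMat k (A := A) F⁻¹ * zᵀ) i j
        = ∑ l, ∑ m, F⁻¹ l m • (z i l * z j m) := by
      intro i j
      simp only [Matrix.mul_apply, liftMat, Matrix.map_apply, Matrix.transpose_apply,
        Finset.sum_mul]
      rw [Finset.sum_comm]
      refine Finset.sum_congr rfl fun l _ => Finset.sum_congr rfl fun m _ => ?_
      rw [← Algebra.commutes, mul_assoc, ← Algebra.smul_def]
    ext i j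
    rw [gen]
    fin_cases i <;> fin_cases j
    · simpa [z, liftMat] using h.haa
    · simpa [z, liftMat, Algebra.smul_def] using h.hab
    · simpa [z, liftMat] using h.hba
    · simpa [z, liftMat] using h.hbb
  have hE : !![0, -q; 1, 0] * Eqm k q = 1 := by
    ext i j
    fin_cases i <;> fin_cases j <;> simp [Eqm, hq]
  have hrel : ∀ ⦃u v⦄, BRel k (Eqm k q) F u v → f u = f v := by
    intro u v huv
    cases huv with
    | left i j =>
      have : (liftMat k (A := FreeAlgebra k (Fin 2 × Fin n)) F⁻¹ * (gens k 2 n)ᵀ *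
          liftMat k (A := FreeAlgebra k (Fin 2 × Fin n)) (Eqm k q) * gens k 2 n).map f
          = (1 : Matrix (Fin n) (Fin n) (FreeAlgebra k (Fin 2 × Fin n))).map f := by
        rw [Matrix.map_mul, Matrix.map_mul, Matrix.map_mul, hg, hgT, hl, hl, Matrix.mul_assoc,
          Matrix.mul_assoc, ← Matrix.mul_assoc zᵀ, e1, hlm, Matrix.nonsing_inv_mul _ hF, hl1]
        simp
      exact congrFun (congrFun this i) j
    | right i j =>
      have : (gens k 2 n * liftMat k (A := FreeAlgebra k (Fin 2 × Fin n)) F⁻¹ * (gens k 2 n)ᵀ *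
          liftMat k (A := FreeAlgebra k (Fin 2 × Fin n)) (Eqm k q)).map f
          = (1 : Matrix (Fin 2) (Fin 2) (FreeAlgebra k (Fin 2 × Fin n))).map f := by
        rw [Matrix.map_mul, Matrix.map_mul, Matrix.map_mul, hg, hgT, hl, hl, e2, hlm, hE, hl1]
        simp
      exact congrFun (congrFun this i) j
  refine ⟨RingQuot.liftAlgHom k ⟨f, hrel⟩, fun j => ?_⟩
  simp [ZMat, gens, f, z]

theorem exists_isotropic {K : Type} [Field K] [IsAlgClosed K] (hn : 2 ≤ n)
    (G : Matrix (Fin n) (Fin n) K) :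
    ∃ β : Fin n → K, β ≠ 0 ∧ ∑ i, ∑ j, G i j * (β i * β j) = 0 := by
  let i0 : Fin n := ⟨0, by omega⟩
  let i1 : Fin n := ⟨1, by omega⟩
  have h01 : i0 ≠ i1 := by simp [i0, i1]
  have form : ∀ s t : K, ∑ i, ∑ j, G i j * ((Pi.single i0 s + Pi.single i1 t : Fin n → K) i *
      (Pi.single i0 s + Pi.single i1 t : Fin n → K) j) =
      G i0 i0 * s * s + (G i0 i1 + G i1 i0) * s * t + G i1 i1 * t * t := by
    intro s t
    simp [Pi.single_apply, add_mul, mul_add, Finset.sum_add_distrib]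
    ring
  by_cases h : G i0 i0 = 0
  · refine ⟨Pi.single i0 1 + Pi.single i1 0, ?_, ?_⟩
    · intro h; have := congrFun h i0; simp at this
    · rw [form, h]; ring
  · obtain ⟨s, hs⟩ : ∃ s : K, G i0 i0 * (s * s) + (G i0 i1 + G i1 i0) * s + G i1 i1 = 0 := by
      have hd : (Polynomial.C (G i0 i0) * Polynomial.X ^ 2 +
          Polynomial.C (G i0 i1 + G i1 i0) * Polynomial.X + Polynomial.C (G i1 i1)).degree ≠ 0 := by
        rw [Polynomial.degree_quadratic h]; decide
      obtain ⟨s, hs⟩ := IsAlgClosed.exists_root _ hd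
      refine ⟨s, ?_⟩
      simp [Polynomial.IsRoot] at hs
      rw [← hs]; ring
    refine ⟨Pi.single i0 s + Pi.single i1 1, ?_, ?_⟩
    · intro h; have := congrFun h i1; simp [Pi.single_apply, h01.symm] at this
    · rw [form, ← hs]; ring

theorem Pt.descend {K : Type} [Field K] [Algebra k K] {A : Type} [Ring A] [Algebra K A]
    [Algebra k A] [IsScalarTower k K A] {a b : Fin n → A}
    {G : Matrix (Fin n) (Fin n) k}
    (h : Pt (algebraMap k K q) (G.map (algebraMap k K)) (F.map (algebraMap k K)) a b) :
    Pt q G F a b := by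
  obtain ⟨h1, h2, h3, h4, h5⟩ := h
  simp only [Matrix.map_apply, ← map_inv₀, ← map_neg, algebraMap_smul] at h1 h2 h3 h4 h5
  exact ⟨h1, h2, h3, h4, h5⟩

theorem separate {K : Type} [Field K] [IsAlgClosed K] [Algebra k K] {A : Type} [Ring A]
    [Algebra K A] (hq : q ≠ 0) (hF : IsUnit F.det) {a b : Fin n → A}
    (h : Pt (algebraMap k K q) (F⁻¹.map (algebraMap k K)) (F.map (algebraMap k K)) a b)
    (c : Fin 2 × Fin n → k) (hc : ∑ p, c p • ZMat k (Eqm k q) F p.1 p.2 = 0) :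
    ∑ i, algebraMap k K (c (0, i)) • a i = 0 ∧ ∑ i, algebraMap k K (c (1, i)) • b i = 0 := by
  letI : Algebra k A := Algebra.compHom A (algebraMap k K)
  haveI : IsScalarTower k K A := IsScalarTower.of_algebraMap_eq fun _ => rfl
  have main : ∀ s : K, s ≠ 0 → s • ∑ i, algebraMap k K (c (0, i)) • a i +
      s⁻¹ • ∑ i, algebraMap k K (c (1, i)) • b i = 0 := by
    intro s hs
    obtain ⟨φ, hφ⟩ := exists_hom hq hF (h.scale hs).descend
    have := congrArg φ hc
    rw [map_zero, map_sum, Fintype.sum_prod_type, Fin.sum_univ_two] at this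
    simp only [map_smul, (hφ _).1, (hφ _).2] at this
    rw [← this, Finset.smul_sum, Finset.smul_sum]
    congr 1 <;>
    · refine Finset.sum_congr rfl fun i _ => ?_
      rw [algebraMap_smul, smul_comm]
  classical
  obtain ⟨s, hs⟩ := Infinite.exists_notMem_finset ({0, 1, -1} : Finset K)
  simp only [Finset.mem_insert, Finset.mem_singleton, not_or] at hs
  obtain ⟨hs0, hs1, hs2⟩ := hs
  have hss : s * s - 1 ≠ 0 := by
    intro h
    have : (s - 1) * (s + 1) = 0 := by linear_combination h
    rcases mul_eq_zero.1 this with h | h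
    · exact hs1 (sub_eq_zero.1 h)
    · exact hs2 (eq_neg_of_add_eq_zero_left h)
  have m1 := main 1 one_ne_zero
  have m2 := main s hs0
  generalize ∑ i, algebraMap k K (c (0, i)) • a i = u at *
  generalize ∑ i, algebraMap k K (c (1, i)) • b i = v at *
  rw [inv_one, one_smul, one_smul] at m1
  have hv : v = -u := eq_neg_of_add_eq_zero_right m1
  have m3 := congrArg (fun y => s • y) m2
  simp only [smul_add, smul_smul, mul_inv_cancel₀ hs0, one_smul, smul_zero] at m3
  have m4 : (s * s - 1) • u = 0 := by rw [sub_smul, one_smul, ← m3, hv]; abel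
  have hu : u = 0 := by
    have := congrArg (fun y => (s * s - 1)⁻¹ • y) m4
    simpa only [smul_smul, inv_mul_cancel₀ hss, one_smul, smul_zero] using this
  exact ⟨hu, by rw [hv, hu, neg_zero]⟩

end hom

end BBaux

/-- **Statement 12.** If `q ∈ k*` satisfies `q² + tr(F·ᵀF⁻¹)·q + 1 = 0` then the
`2n` generators `z i j` of `B(E_q, F)` are linearly independent over `k`. -/
theorem BB_Eq_generators_linearIndependent {n : ℕ} (hn : 2 ≤ n) (q : k) (hq : q ≠ 0)
    (F : Matrix (Fin n) (Fin n) k) (hF : IsUnit F.det)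
    (htr : q ^ 2 + (F * F⁻¹ᵀ).trace * q + 1 = 0) :
    LinearIndependent k (fun p : Fin 2 × Fin n => ZMat k (Eqm k q) F p.1 p.2) := by
  rw [Fintype.linearIndependent_iff]
  intro c hc
  let K := AlgebraicClosure k
  let ι := algebraMap k K
  have hι : Function.Injective ι := ι.injective
  obtain ⟨β, hβ0, hβ⟩ := BBaux.exists_isotropic (K := K) hn (F⁻¹.map ι)
  have hGF : F⁻¹.map ι * F.map ι = 1 := by
    rw [← Matrix.map_mul, Matrix.nonsing_inv_mul _ hF]; simp
  have hFG : F.map ι * F⁻¹.map ι = 1 := by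
    rw [← Matrix.map_mul, Matrix.mul_nonsing_inv _ hF]; simp
  have hq' : ι q ≠ 0 := by simpa using hq
  have htr' : ι q ^ 2 + (∑ i, ∑ j, (F⁻¹.map ι) i j * (F.map ι) i j) * ι q + 1 = 0 := by
    have := congrArg ι htr
    simp only [map_add, map_mul, map_pow, map_one, map_zero, Matrix.trace, Matrix.diag_apply,
      Matrix.mul_apply, Matrix.transpose_apply, map_sum] at this
    simpa only [Matrix.map_apply, mul_comm (ι (F⁻¹ _ _))] using this
  have htr'' : (ι q)⁻¹ ^ 2 + (∑ i, ∑ j, (F⁻¹.map ι) i j * (F.map ι) i j) * (ι q)⁻¹ + 1 = 0 := by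
    generalize (∑ i, ∑ j, (F⁻¹.map ι) i j * (F.map ι) i j) = τ at *
    have h1 : ι q * (ι q)⁻¹ = 1 := mul_inv_cancel₀ hq'
    generalize (ι q)⁻¹ = r at *
    linear_combination r ^ 2 * htr' - (ι q * r + 1 + τ * r) * h1
  obtain ⟨A, _, _, a, b, hp, hi⟩ := BBaux.exists_rep hq' hGF hFG htr' hβ0 hβ
  obtain ⟨A', _, _, a', b', hp', hi'⟩ := BBaux.exists_rep (inv_ne_zero hq') hGF hFG htr'' hβ0 hβ
  have r1 := hi _ (BBaux.separate hq hF hp c hc).1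
  have r2 := hi' _ (BBaux.separate hq hF (hp'.swap hq') c hc).2
  rintro ⟨p, i⟩
  fin_cases p
  · exact hι (by simpa using congrFun r1 i)
  · exact hι (by simpa using congrFun r2 i)
end
end
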